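/- Let s be a period of length P (a finite sequence of positive integers that is not the concatenation of several copies of a shorter block). Then the primitive class determined by s is unique if and only if P is odd; precisely: (a) if P is odd, then any two primitive integer binary quadratic forms f, g of positive nonsquare discriminant with Γ(f) and Γ(g) both equal to s up to cyclic permutation are SL(2,ℤ)-equivalent; (b) if P is even, there exist two primitive forms f, g of positive nonsquare discriminant, not SL(2,ℤ)-equivalent to each other, with Γ(f) and Γ(g) both equal to s up to cyclic permutation. -/

import Mathlib

/-- Iterates of the Gauss map starting from `ξ`. -/
noncomputable def gaussIter (ξ : ℝ) : ℕ → ℝ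
  | 0 => ξ
  | n + 1 => 1 / (gaussIter ξ n - (⌊gaussIter ξ n⌋ : ℝ))

/-- The `n`-th partial quotient of the regular continued fraction expansion of `ξ`. -/
noncomputable def cfTerm (ξ : ℝ) (n : ℕ) : ℤ := ⌊gaussIter ξ n⌋

/-- The continued fraction expansion of `ξ` is periodic with period length `P` from index `N`. -/
def IsEventuallyPeriodicCF (ξ : ℝ) (N P : ℕ) : Prop :=
  1 ≤ P ∧ ∀ j : ℕ, cfTerm ξ (N + j + P) = cfTerm ξ (N + j)

/-- `s` is the (minimal) period of the eventually periodic regular continued fraction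
expansion of `ξ`; it is well defined up to cyclic permutation. -/
def IsCFPeriod (s : List ℤ) (ξ : ℝ) : Prop :=
  s ≠ [] ∧
  (∃ N : ℕ, ∀ j : ℕ, cfTerm ξ (N + j) = s.getD (j % s.length) 0) ∧
  (∀ P : ℕ, 1 ≤ P → (∃ N : ℕ, IsEventuallyPeriodicCF ξ N P) → s.length ≤ P)

/-- The value of the binary quadratic form `f = (m, n, k)`, i.e. `m*x^2 + n*y^2 + k*x*y`. -/
def qval (f : ℤ × ℤ × ℤ) (x y : ℤ) : ℤ := f.1 * x ^ 2 + f.2.1 * y ^ 2 + f.2.2 * x * y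

/-- The discriminant `k^2 - 4*m*n` of the form `f = (m, n, k)`. -/
def formDisc (f : ℤ × ℤ × ℤ) : ℤ := f.2.2 ^ 2 - 4 * f.1 * f.2.1

/-- `SL(2,ℤ)`-equivalence of binary quadratic forms. -/
def SLEquiv (f g : ℤ × ℤ × ℤ) : Prop :=
  ∃ a b c d : ℤ, a * d - b * c = 1 ∧
    ∀ x y : ℤ, qval g x y = qval f (a * x + b * y) (c * x + d * y)

/-- The root with the plus sign of `m*ξ^2 + k*ξ + n = 0`, for `f = (m, n, k)`. -/
noncomputable def xiPlus (f : ℤ × ℤ × ℤ) : ℝ :=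
  (-(f.2.2 : ℝ) + Real.sqrt ((formDisc f : ℤ) : ℝ)) / (2 * (f.1 : ℝ))

/-- The root with the minus sign of `m*ξ^2 + k*ξ + n = 0`, for `f = (m, n, k)`. -/
noncomputable def xiMinus (f : ℤ × ℤ × ℤ) : ℝ :=
  (-(f.2.2 : ℝ) - Real.sqrt ((formDisc f : ℤ) : ℝ)) / (2 * (f.1 : ℝ))

/-- The conjugate `(m, n, -k)` of the form `(m, n, k)`. -/
def conjF (f : ℤ × ℤ × ℤ) : ℤ × ℤ × ℤ := (f.1, f.2.1, -f.2.2)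

/-- The adjoint `(-n, -m, k)` of the form `(m, n, k)`. -/
def adjF (f : ℤ × ℤ × ℤ) : ℤ × ℤ × ℤ := (-f.2.1, -f.1, f.2.2)

/-- The antipodal `(-n, -m, -k)` of the form `(m, n, k)`. -/
def antipF (f : ℤ × ℤ × ℤ) : ℤ × ℤ × ℤ := (-f.2.1, -f.1, -f.2.2)

/-- A form `(m, n, k)` is primitive if `gcd(m, n, k) = 1`. -/
def IsPrimitiveForm (f : ℤ × ℤ × ℤ) : Prop := Int.gcd f.1 (Int.gcd f.2.1 f.2.2) = 1

/-- A period: a nonempty finite sequence of positive integers which is not the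
concatenation of several copies of a shorter block. -/
def IsPeriodWord (s : List ℤ) : Prop :=
  s ≠ [] ∧ (∀ a ∈ s, 0 < a) ∧
  ∀ (t : List ℤ) (j : ℕ), 2 ≤ j → s ≠ (List.replicate j t).flatten

theorem gaussIter_add (x : ℝ) (N j : ℕ) : gaussIter (gaussIter x N) j = gaussIter x (N + j) := by
  induction j with
  | zero => rfl
  | succ j ih => rw [← add_assoc, gaussIter, gaussIter, ih]

theorem cfTerm_add (x : ℝ) (N j : ℕ) : cfTerm (gaussIter x N) j = cfTerm x (N + j) := by
  rw [cfTerm, cfTerm, gaussIter_add]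

theorem gaussIter_one (x : ℝ) : gaussIter x 1 = 1 / (x - (⌊x⌋ : ℝ)) := rfl

theorem irr_step {x : ℝ} (hx : Irrational x) : Irrational (1 / (x - (⌊x⌋ : ℝ))) := by
  rw [one_div]
  exact (hx.sub_intCast _).inv

theorem irr_iter {x : ℝ} (hx : Irrational x) (n : ℕ) : Irrational (gaussIter x n) := by
  induction n with
  | zero => exact hx
  | succ n ih => exact irr_step ih

theorem fract_pos_irr {x : ℝ} (hx : Irrational x) : 0 < x - (⌊x⌋ : ℝ) := by
  have h1 := Int.floor_le x
  rcases h1.lt_or_eq with h | h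
  · linarith
  · exact absurd h.symm (hx.ne_int _)

theorem one_lt_step {x : ℝ} (hx : Irrational x) : 1 < 1 / (x - (⌊x⌋ : ℝ)) := by
  have h := fract_pos_irr hx
  rw [lt_div_iff₀ h]
  linarith [Int.lt_floor_add_one x]

theorem eq_step {x : ℝ} (hx : Irrational x) : x = ⌊x⌋ + 1 / gaussIter x 1 := by
  rw [gaussIter_one, one_div_one_div]; ring

theorem cf_close (n : ℕ) : ∀ x y : ℝ, Irrational x → Irrational y →
    (∀ j, cfTerm x j = cfTerm y j) → |x - y| ≤ (1/2 : ℝ) ^ n := by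
  induction n with
  | zero =>
    intro x y hx hy h
    have := Int.abs_sub_lt_one_of_floor_eq_floor (h 0)
    simp only [gaussIter] at this
    simpa using this.le
  | succ n ih =>
    intro x y hx hy h
    have hx1 := irr_iter hx 1
    have hy1 := irr_iter hy 1
    have h2 := ih (gaussIter x 2) (gaussIter y 2) (irr_iter hx 2) (irr_iter hy 2)
      (fun j => by rw [cfTerm_add, cfTerm_add]; exact h _)
    have ex := eq_step hx
    have ey := eq_step hy
    have ex1 := eq_step hx1
    have ey1 := eq_step hy1
    rw [gaussIter_add] at ex1 ey1
    have f0 : ⌊x⌋ = ⌊y⌋ := h 0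
    have f1 : ⌊gaussIter x 1⌋ = ⌊gaussIter y 1⌋ := h 1
    have gx1 : 1 < gaussIter x 1 := one_lt_step hx
    have gy1 : 1 < gaussIter y 1 := one_lt_step hy
    have gx2 : 1 < gaussIter x 2 := one_lt_step hx1
    have gy2 : 1 < gaussIter y 2 := one_lt_step hy1
    have hb : (1 : ℝ) ≤ (⌊gaussIter x 1⌋ : ℝ) := by
      exact_mod_cast Int.le_floor.mpr (by simpa using gx1.le)
    rw [f0] at ex
    rw [f1] at ex1 hb
    norm_num at ex1 ey1
    generalize (⌊gaussIter y 1⌋ : ℝ) = b at *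
    generalize (⌊y⌋ : ℝ) = a at *
    generalize gaussIter x 1 = x1 at *
    generalize gaussIter y 1 = y1 at *
    generalize gaussIter x 2 = x2 at *
    generalize gaussIter y 2 = y2 at *
    have px : x1 * x2 = b * x2 + 1 := by rw [ex1]; field_simp
    have py : y1 * y2 = b * y2 + 1 := by rw [ey1]; field_simp
    have qx : 2 ≤ x1 * x2 := by nlinarith
    have qy : 2 ≤ y1 * y2 := by nlinarith
    have key : (x - y) * ((x1 * x2) * (y1 * y2)) = x2 - y2 := by
      have : x - y = (y1 - x1) / (x1 * y1) := by
        rw [ex, ey]; field_simp; ring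
      have e2 : (y1 - x1) * (x2 * y2) = x2 - y2 := by
        rw [ex1, ey1]; field_simp; ring
      rw [this]; field_simp; linarith
    have hk : |x - y| * ((x1 * x2) * (y1 * y2)) = |x2 - y2| := by
      rw [← key, abs_mul, abs_of_pos (a := (x1 * x2) * (y1 * y2)) (by positivity)]
    have : 2 ≤ (x1 * x2) * (y1 * y2) := by nlinarith
    have h3 := abs_nonneg (x - y)
    rw [pow_succ]
    nlinarith

theorem cf_unique {x y : ℝ} (hx : Irrational x) (hy : Irrational y)
    (h : ∀ j, cfTerm x j = cfTerm y j) : x = y := by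
  have h0 : |x - y| ≤ 0 := by
    refine ge_of_tendsto' (tendsto_pow_atTop_nhds_zero_of_lt_one (r := (1/2 : ℝ)) (by norm_num) (by norm_num))
      (fun n => cf_close n x y hx hy h)
  exact sub_eq_zero.mp (abs_eq_zero.mp (le_antisymm h0 (abs_nonneg _)))

/-! Serret type relation -/

def TailRel (e : ℤ) (x y : ℝ) : Prop :=
  ∃ N M : ℕ, e = (-1) ^ (N + M) ∧ gaussIter x N = gaussIter y M

theorem TailRel.symm {e : ℤ} {x y : ℝ} (h : TailRel e x y) : TailRel e y x := by
  obtain ⟨N, M, h1, h2⟩ := h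
  exact ⟨M, N, by rw [add_comm]; exact h1, h2.symm⟩

theorem TailRel.trans {e e' : ℤ} {x y z : ℝ} (h : TailRel e x y) (h' : TailRel e' y z) :
    TailRel (e * e') x z := by
  obtain ⟨N, M, h1, h2⟩ := h
  obtain ⟨N', M', h1', h2'⟩ := h'
  refine ⟨N + N', M' + M, ?_, ?_⟩
  · rw [h1, h1', ← pow_add]; congr 1; ring
  · rw [← gaussIter_add, h2, gaussIter_add, add_comm M N', ← gaussIter_add, h2', gaussIter_add]

theorem TailRel.refl (x : ℝ) : TailRel 1 x x := ⟨0, 0, by simp, rfl⟩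

theorem tail_step (x : ℝ) : TailRel (-1) (gaussIter x 1) x := ⟨0, 1, by simp, rfl⟩

theorem gauss_add_int (x : ℝ) (q : ℤ) : gaussIter (x + q) 1 = gaussIter x 1 := by
  rw [gaussIter_one, gaussIter_one, Int.floor_add_intCast]; push_cast; congr 1; ring

theorem tail_add_int (x : ℝ) (q : ℤ) : TailRel 1 (x + q) x :=
  ⟨1, 1, by simp, gauss_add_int x q⟩

theorem gauss_one_of (x : ℝ) (z : ℤ) (h1 : (z : ℝ) ≤ x) (h2 : x < z + 1) :
    gaussIter x 1 = 1 / (x - z) := by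
  rw [gaussIter_one, Int.floor_eq_iff.mpr ⟨h1, h2⟩]

theorem tail_neg_aux {x : ℝ} (hx : Irrational x) (h0 : 0 < x) (h1 : x < 1 / 2) :
    TailRel (-1) (-x) x := by
  have e1 : gaussIter x 1 = 1 / x := by
    rw [gauss_one_of _ 0 (by simpa using h0.le) (by push_cast; linarith)]; simp
  have e2 : gaussIter (-x) 1 = 1 / (1 - x) := by
    rw [gauss_one_of _ (-1) (by push_cast; linarith) (by push_cast; linarith)]
    push_cast; congr 1; ring
  have e3 : gaussIter (1 / (1 - x)) 1 = 1 / x + ((-1 : ℤ) : ℝ) := by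
    have p : 0 < 1 - x := by linarith
    rw [gauss_one_of _ 1 (by push_cast; rw [le_div_iff₀ p]; linarith)
      (by push_cast; rw [div_lt_iff₀ p]; linarith)]
    have : 1 / (1 - x) - ((1 : ℤ) : ℝ) = x / (1 - x) := by push_cast; field_simp; ring
    rw [this]; push_cast; field_simp; ring
  have r1 := (tail_step (-x)).symm
  rw [e2] at r1
  have r2 := (tail_step (1 / (1 - x))).symm
  rw [e3] at r2
  have r3 := tail_add_int (1 / x) (-1)
  have r4 := tail_step x
  rw [e1] at r4
  simpa using ((r1.trans r2).trans r3).trans r4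

theorem tail_neg_aux2 {x : ℝ} (hx : Irrational x) (h0 : 0 < x) (h1 : x < 1) :
    TailRel (-1) (-x) x := by
  rcases lt_trichotomy x (1/2) with h | h | h
  · exact tail_neg_aux hx h0 h
  · exact absurd h (by have := hx.ne_rational 1 2; simpa using this)
  · have hy : Irrational (1 - x) := by simpa using hx.intCast_sub 1
    have r := (tail_neg_aux hy (by linarith) (by linarith)).symm
    have r1 := tail_add_int (-x) 1
    have r2 := tail_add_int (-(1 - x)) 1
    have e1 : -x + ((1 : ℤ) : ℝ) = 1 - x := by push_cast; ring
    have e2 : -(1 - x) + ((1 : ℤ) : ℝ) = x := by push_cast; ring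
    rw [e1] at r1; rw [e2] at r2
    simpa using (r1.symm.trans r).trans r2.symm

theorem tail_neg {x : ℝ} (hx : Irrational x) : TailRel (-1) (-x) x := by
  have r := tail_neg_aux2 (x := x - (⌊x⌋ : ℝ)) (hx.sub_intCast _) (fract_pos_irr hx)
    (by linarith [Int.lt_floor_add_one x])
  have r1 := tail_add_int (x - (⌊x⌋ : ℝ)) ⌊x⌋
  have r2 := tail_add_int (-(x - (⌊x⌋ : ℝ))) (-⌊x⌋)
  have e1 : x - (⌊x⌋ : ℝ) + ⌊x⌋ = x := by ring
  have e2 : -(x - (⌊x⌋ : ℝ)) + ((-⌊x⌋ : ℤ) : ℝ) = -x := by push_cast; ring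
  rw [e1] at r1; rw [e2] at r2
  simpa using (r2.trans r).trans r1.symm

theorem tail_inv_aux {x : ℝ} (hx : Irrational x) (h0 : 0 < x) : TailRel (-1) (1 / x) x := by
  have main : ∀ y : ℝ, 0 < y → y < 1 → TailRel (-1) (1 / y) y := by
    intro y h0 h1
    have e1 : gaussIter y 1 = 1 / y := by
      rw [gauss_one_of _ 0 (by simpa using h0.le) (by push_cast; linarith)]; simp
    have r4 := tail_step y
    rwa [e1] at r4
  rcases lt_trichotomy x 1 with h | h | h
  · exact main x h0 h
  · exact absurd h (by simpa using hx.ne_int 1)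
  · have := main (1 / x) (by positivity) (by rw [div_lt_one h0]; exact h)
    rw [one_div_one_div] at this
    exact this.symm

theorem tail_inv {x : ℝ} (hx : Irrational x) : TailRel (-1) (1 / x) x := by
  rcases lt_trichotomy x 0 with h | h | h
  · have r1 := tail_inv_aux hx.neg (by linarith)
    have r2 := tail_neg hx
    have hi : Irrational (1 / -x) := by rw [one_div]; exact hx.neg.inv
    have r3 := tail_neg hi
    have e : -(1 / -x) = 1 / x := by rw [one_div_neg_eq_neg_one_div, neg_neg]
    rw [e] at r3
    simpa using (r3.trans r1).trans r2
  · exact absurd h (by simpa using hx.ne_int 0)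
  · exact tail_inv_aux hx h

theorem lin_irr {x : ℝ} (hx : Irrational x) {c d : ℤ} (h : (c : ℝ) * x + d = 0) : c = 0 ∧ d = 0 := by
  have hc : c = 0 := by
    by_contra hc
    exact ((hx.intCast_mul hc).add_intCast d).ne_int 0 (by simpa using h)
  subst hc
  refine ⟨rfl, ?_⟩
  simpa using h

theorem serret {x : ℝ} (hx : Irrational x) (n : ℕ) : ∀ (a b c d e : ℤ), c.natAbs ≤ n →
    (e = 1 ∨ e = -1) → a * d - b * c = e →
    Irrational ((a * x + b) / (c * x + d)) ∧ TailRel e ((a * x + b) / (c * x + d)) x := by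
  induction n with
  | zero =>
    intro a b c d e hc he hdet
    have hc : c = 0 := by omega
    subst hc
    have : a * d = e := by linarith
    have had : (a = 1 ∧ d = 1 ∧ e = 1) ∨ (a = 1 ∧ d = -1 ∧ e = -1) ∨ (a = -1 ∧ d = 1 ∧ e = -1)
        ∨ (a = -1 ∧ d = -1 ∧ e = 1) := by
      have hu : IsUnit a := by
        apply isUnit_of_mul_isUnit_left (y := d)
        rw [this]; rcases he with rfl | rfl <;> simp
      rcases Int.isUnit_iff.mp hu with rfl | rfl <;> rcases he with rfl | rfl <;> omega
    rcases had with ⟨rfl, rfl, rfl⟩ | ⟨rfl, rfl, rfl⟩ | ⟨rfl, rfl, rfl⟩ | ⟨rfl, rfl, rfl⟩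
    · have e1 : (((1 : ℤ) : ℝ) * x + b) / (((0 : ℤ) : ℝ) * x + ((1 : ℤ) : ℝ)) = x + b := by
        push_cast; simp
      rw [e1]
      exact ⟨hx.add_intCast _, tail_add_int x b⟩
    · have e1 : (((1 : ℤ) : ℝ) * x + b) / (((0 : ℤ) : ℝ) * x + ((-1 : ℤ) : ℝ)) = -x + ((-b : ℤ) : ℝ) := by
        push_cast; field_simp; ring
      rw [e1]
      exact ⟨hx.neg.add_intCast _, by simpa using (tail_add_int (-x) (-b)).trans (tail_neg hx)⟩
    · have e1 : (((-1 : ℤ) : ℝ) * x + b) / (((0 : ℤ) : ℝ) * x + ((1 : ℤ) : ℝ)) = -x + ((b : ℤ) : ℝ) := by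
        push_cast; simp
      rw [e1]
      exact ⟨hx.neg.add_intCast _, by simpa using (tail_add_int (-x) (b)).trans (tail_neg hx)⟩
    · have e1 : (((-1 : ℤ) : ℝ) * x + b) / (((0 : ℤ) : ℝ) * x + ((-1 : ℤ) : ℝ)) = x + ((-b : ℤ) : ℝ) := by
        push_cast; field_simp; ring
      rw [e1]
      exact ⟨hx.add_intCast _, tail_add_int x (-b)⟩
  | succ n ih =>
    intro a b c d e hc he hdet
    by_cases hc0 : c = 0
    · exact ih a b c d e (by simp [hc0]) he hdet
    have hr : (a % c).natAbs ≤ n := by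
      have h1 := Int.emod_nonneg a hc0
      have h2 := Int.emod_lt_abs a hc0
      rw [Int.abs_eq_natAbs] at h2
      omega
    have hdm := Int.emod_add_mul_ediv a c
    obtain ⟨hi, ht⟩ := ih c d (a % c) (b - (a / c) * d) (-e) hr (by omega) (by
      have : a % c = a - c * (a / c) := by linarith
      rw [this, ← hdet]; ring)
    have ha : (a : ℝ) = (a % c : ℤ) + c * (a / c : ℤ) := by exact_mod_cast hdm.symm
    have hne : (c : ℝ) * x + d ≠ 0 := fun h => hc0 (lin_irr hx h).1
    have key : ((a : ℝ) * x + b) / (c * x + d) =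
        1 / ((c * x + d) / ((a % c : ℤ) * x + ((b - (a / c) * d : ℤ) : ℝ))) + ((a / c : ℤ) : ℝ) := by
      rw [one_div_div, ha]; push_cast
      field_simp; ring
    rw [key]
    refine ⟨?_, ?_⟩
    · rw [one_div]; exact hi.inv.add_intCast _
    · simpa using ((tail_add_int _ (a / c)).trans (tail_inv hi)).trans ht

/-! Forms -/

def GRel (e : ℤ) (f g : ℤ × ℤ × ℤ) : Prop :=
  ∃ a b c d : ℤ, a * d - b * c = e ∧
    ∀ x y : ℤ, qval g x y = e * qval f (a * x + b * y) (c * x + d * y)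

theorem GRel.trans {e e' : ℤ} {f g h : ℤ × ℤ × ℤ} (h1 : GRel e f g) (h2 : GRel e' g h) :
    GRel (e * e') f h := by
  obtain ⟨a, b, c, d, hd, H⟩ := h1
  obtain ⟨a', b', c', d', hd', H'⟩ := h2
  refine ⟨a * a' + b * c', a * b' + b * d', c * a' + d * c', c * b' + d * d', ?_, ?_⟩
  · rw [← hd, ← hd']; ring
  · intro x y
    rw [H', H]
    have e1 : a * (a' * x + b' * y) + b * (c' * x + d' * y) =
      (a * a' + b * c') * x + (a * b' + b * d') * y := by ring
    have e2 : c * (a' * x + b' * y) + d * (c' * x + d' * y) =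
      (c * a' + d * c') * x + (c * b' + d * d') * y := by ring
    rw [e1, e2]; ring

theorem GRel.symm {e : ℤ} (he : e * e = 1) {f g : ℤ × ℤ × ℤ} (h1 : GRel e f g) : GRel e g f := by
  obtain ⟨a, b, c, d, hd, H⟩ := h1
  refine ⟨e * d, -e * b, -e * c, e * a, ?_, ?_⟩
  · linear_combination (a * d - b * c) * he + hd
  · intro x y
    rw [H]
    have e1 : a * (e * d * x + -e * b * y) + b * (-e * c * x + e * a * y) = x := by
      linear_combination (e * x) * hd + x * he
    have e2 : c * (e * d * x + -e * b * y) + d * (-e * c * x + e * a * y) = y := by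
      linear_combination (e * y) * hd + y * he
    rw [e1, e2, ← mul_assoc, he, one_mul]

theorem GRel.toSL {f g : ℤ × ℤ × ℤ} (h : GRel 1 f g) : SLEquiv f g := by
  obtain ⟨a, b, c, d, hd, H⟩ := h
  exact ⟨a, b, c, d, hd, fun x y => by rw [H, one_mul]⟩

/-- The Gauss step on forms. -/
noncomputable def stepF (f : ℤ × ℤ × ℤ) : ℤ × ℤ × ℤ :=
  (-(f.1 * ⌊xiPlus f⌋ ^ 2 + f.2.2 * ⌊xiPlus f⌋ + f.2.1), -f.1, -(2 * f.1 * ⌊xiPlus f⌋ + f.2.2))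

theorem stepF_rel (f : ℤ × ℤ × ℤ) : GRel (-1) f (stepF f) := by
  refine ⟨⌊xiPlus f⌋, 1, 1, 0, by ring, ?_⟩
  intro x y
  simp only [qval, stepF]
  ring

theorem stepF_disc (f : ℤ × ℤ × ℤ) : formDisc (stepF f) = formDisc f := by
  simp only [formDisc, stepF]; ring

theorem bez3 (m n k : ℤ) : ∃ x y z : ℤ, m * x + n * y + k * z = (Int.gcd m (Int.gcd n k) : ℤ) := by
  have h1 := Int.gcd_eq_gcd_ab m (Int.gcd n k)
  have h2 := Int.gcd_eq_gcd_ab n k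
  generalize Int.gcdB m (Int.gcd n k) = v at *
  refine ⟨Int.gcdA m (Int.gcd n k), Int.gcdA n k * v, Int.gcdB n k * v, ?_⟩
  rw [h1]
  linear_combination (-v) * h2

theorem prim_iff (f : ℤ × ℤ × ℤ) : IsPrimitiveForm f ↔
    ∃ x y z : ℤ, f.1 * x + f.2.1 * y + f.2.2 * z = 1 := by
  unfold IsPrimitiveForm
  constructor
  · intro h
    obtain ⟨x, y, z, hh⟩ := bez3 f.1 f.2.1 f.2.2
    exact ⟨x, y, z, by rw [hh, h]; rfl⟩
  · rintro ⟨x, y, z, h⟩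
    have hd : ((Int.gcd f.1 (Int.gcd f.2.1 f.2.2) : ℕ) : ℤ) ∣ 1 := by
      rw [← h]
      have h1 : ((Int.gcd f.1 (Int.gcd f.2.1 f.2.2) : ℕ) : ℤ) ∣ (Int.gcd f.2.1 f.2.2 : ℤ) := Int.gcd_dvd_right ..
      refine dvd_add (dvd_add ?_ ?_) ?_
      · exact (Int.gcd_dvd_left ..).mul_right _
      · exact (h1.trans (Int.gcd_dvd_left ..)).mul_right _
      · exact (h1.trans (Int.gcd_dvd_right ..)).mul_right _
    have := Int.natCast_dvd_natCast.mp (by simpa using hd : ((Int.gcd f.1 (Int.gcd f.2.1 f.2.2) : ℕ) : ℤ) ∣ ((1 : ℕ) : ℤ))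
    exact Nat.dvd_one.mp this

theorem stepF_prim {f : ℤ × ℤ × ℤ} (h : IsPrimitiveForm f) : IsPrimitiveForm (stepF f) := by
  rw [prim_iff] at h ⊢
  obtain ⟨x, y, z, h⟩ := h
  refine ⟨-y, -x - ⌊xiPlus f⌋ ^ 2 * y + 2 * ⌊xiPlus f⌋ * z, ⌊xiPlus f⌋ * y - z, ?_⟩
  simp only [stepF]
  linear_combination h

theorem lead_ne {f : ℤ × ℤ × ℤ} (hs : ¬ IsSquare (formDisc f)) : f.1 ≠ 0 := by
  intro h
  apply hs
  exact ⟨f.2.2, by simp [formDisc, h]; ring⟩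

theorem irr_sqrt {D : ℤ} (h0 : 0 < D) (hs : ¬ IsSquare D) : Irrational (Real.sqrt D) := by
  exact irrational_sqrt_intCast_iff.mpr ⟨hs, h0.le⟩

theorem irr_xi {f : ℤ × ℤ × ℤ} (h0 : 0 < formDisc f) (hs : ¬ IsSquare (formDisc f)) :
    Irrational (xiPlus f) := by
  have h := irr_sqrt h0 hs
  have hm := lead_ne hs
  have h1 : Irrational (((-f.2.2 : ℤ) : ℝ) + Real.sqrt (formDisc f : ℝ)) := h.intCast_add _
  have h2 := h1.div_intCast (m := 2 * f.1) (by simpa using hm)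
  unfold xiPlus
  push_cast at h2
  exact h2

theorem sqrt_sq_disc {f : ℤ × ℤ × ℤ} (h0 : 0 < formDisc f) :
    Real.sqrt (formDisc f : ℝ) ^ 2 = (f.2.2 : ℝ) ^ 2 - 4 * f.1 * f.2.1 := by
  rw [Real.sq_sqrt (by exact_mod_cast h0.le)]
  simp [formDisc]

theorem xi_root {f : ℤ × ℤ × ℤ} (h0 : 0 < formDisc f) (hs : ¬ IsSquare (formDisc f)) :
    (f.1 : ℝ) * xiPlus f ^ 2 + f.2.2 * xiPlus f + f.2.1 = 0 := by
  have hm : (f.1 : ℝ) ≠ 0 := by exact_mod_cast lead_ne hs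
  have hq := sqrt_sq_disc h0
  unfold xiPlus
  generalize Real.sqrt (formDisc f : ℝ) = S at *
  field_simp
  linear_combination hq

theorem stepF_xi {f : ℤ × ℤ × ℤ} (h0 : 0 < formDisc f) (hs : ¬ IsSquare (formDisc f)) :
    xiPlus (stepF f) = gaussIter (xiPlus f) 1 := by
  have hi := irr_xi h0 hs
  have hp := fract_pos_irr hi
  have hm : (f.1 : ℝ) ≠ 0 := by exact_mod_cast lead_ne hs
  have hm' : ((stepF f).1 : ℝ) ≠ 0 := by
    have := lead_ne (f := stepF f) (by rwa [stepF_disc])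
    exact_mod_cast this
  have hq := sqrt_sq_disc h0
  rw [gaussIter_one, eq_div_iff hp.ne']
  conv_lhs => rw [xiPlus, stepF_disc]
  rw [div_mul_eq_mul_div, div_eq_iff (by simpa using hm')]
  have hx : xiPlus f * (2 * f.1) = -(f.2.2 : ℝ) + Real.sqrt (formDisc f : ℝ) := by
    unfold xiPlus; field_simp
  simp only [stepF]
  push_cast
  generalize Real.sqrt (formDisc f : ℝ) = S at *
  generalize (⌊xiPlus f⌋ : ℝ) = a at *
  generalize xiPlus f = X at *
  apply mul_left_cancel₀ (mul_ne_zero two_ne_zero hm)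
  linear_combination (2 * f.1 * a + f.2.2 + S) * hx + hq

theorem iter_form {f : ℤ × ℤ × ℤ} (hp : IsPrimitiveForm f) (h0 : 0 < formDisc f)
    (hs : ¬ IsSquare (formDisc f)) (n : ℕ) : ∃ g, IsPrimitiveForm g ∧ formDisc g = formDisc f ∧
      GRel ((-1) ^ n) f g ∧ xiPlus g = gaussIter (xiPlus f) n := by
  induction n with
  | zero => exact ⟨f, hp, rfl, ⟨1, 0, 0, 1, by simp, by simp⟩, rfl⟩
  | succ n ih =>
    obtain ⟨g, h1, h2, h3, h4⟩ := ih
    refine ⟨stepF g, stepF_prim h1, by rw [stepF_disc, h2], ?_, ?_⟩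
    · rw [pow_succ]; exact h3.trans (stepF_rel g)
    · rw [stepF_xi (by rwa [h2]) (by rwa [h2]), h4, gaussIter_add]

theorem form_unique {f g : ℤ × ℤ × ℤ} (hf : IsPrimitiveForm f) (hg : IsPrimitiveForm g)
    (f0 : 0 < formDisc f) (fs : ¬ IsSquare (formDisc f))
    (g0 : 0 < formDisc g) (gs : ¬ IsSquare (formDisc g)) (h : xiPlus f = xiPlus g) : f = g := by
  have hi := irr_xi f0 fs
  have rf := xi_root f0 fs
  have rg := xi_root g0 gs
  rw [← h] at rg
  have hl := lin_irr hi (c := g.1 * f.2.2 - f.1 * g.2.2) (d := g.1 * f.2.1 - f.1 * g.2.1) (by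
    push_cast
    linear_combination (g.1 : ℝ) * rf - (f.1 : ℝ) * rg)
  obtain ⟨l1, l2⟩ := hl
  have mf := lead_ne fs
  have mg := lead_ne gs
  rw [prim_iff] at hf hg
  obtain ⟨x, y, z, hf⟩ := hf
  obtain ⟨x', y', z', hg⟩ := hg
  have d1 : f.1 ∣ g.1 := ⟨g.1 * x + g.2.1 * y + g.2.2 * z, by
    linear_combination (-g.1) * hf + y * l2 + z * l1⟩
  have d2 : g.1 ∣ f.1 := ⟨f.1 * x' + f.2.1 * y' + f.2.2 * z', by
    linear_combination (-f.1) * hg - y' * l2 - z' * l1⟩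
  obtain ⟨m, n, k⟩ := f
  obtain ⟨m', n', k'⟩ := g
  simp only at *
  rcases Int.natAbs_eq_natAbs_iff.mp (Int.natAbs_eq_of_dvd_dvd d1 d2) with e | e
  · subst e
    have : k = k' := mul_left_cancel₀ mf (by linarith)
    have : n = n' := mul_left_cancel₀ mf (by linarith)
    simp [*]
  · exfalso
    have e' : m' = -m := by omega
    subst e'
    have : k' = -k := mul_left_cancel₀ mf (by linarith)
    have : n' = -n := mul_left_cancel₀ mf (by linarith)
    subst k' n'
    have hD : formDisc (-m, -n, -k) = formDisc (m, n, k) := by simp [formDisc]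
    simp only [xiPlus, hD] at h
    have hS : 0 < Real.sqrt (formDisc (m, n, k) : ℝ) := Real.sqrt_pos.mpr (by exact_mod_cast f0)
    have hm : (m : ℝ) ≠ 0 := by exact_mod_cast mf
    push_cast at h
    rw [div_eq_div_iff (by positivity) (by simpa using hm)] at h
    have : (m : ℝ) * Real.sqrt (formDisc (m, n, k) : ℝ) = 0 := by linarith
    rcases mul_eq_zero.mp this with h | h
    · exact hm h
    · linarith

theorem SL_xi {f g : ℤ × ℤ × ℤ} (f0 : 0 < formDisc f) (fs : ¬ IsSquare (formDisc f))
    (g0 : 0 < formDisc g) (gs : ¬ IsSquare (formDisc g)) (h : SLEquiv f g) :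
    TailRel 1 (xiPlus f) (xiPlus g) := by
  obtain ⟨a, b, c, d, hd, H⟩ := h
  have hi := irr_xi g0 gs
  have hmf : (f.1 : ℝ) ≠ 0 := by exact_mod_cast lead_ne fs
  have hmg : (g.1 : ℝ) ≠ 0 := by exact_mod_cast lead_ne gs
  have h10 := H 1 0
  have h01 := H 0 1
  have h11 := H 1 1
  simp only [qval] at h10 h01 h11
  have gm : g.1 = f.1 * a ^ 2 + f.2.1 * c ^ 2 + f.2.2 * a * c := by linear_combination h10
  have gn : g.2.1 = f.1 * b ^ 2 + f.2.1 * d ^ 2 + f.2.2 * b * d := by linear_combination h01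
  have gk : g.2.2 = 2 * f.1 * a * b + 2 * f.2.1 * c * d + f.2.2 * (a * d + b * c) := by
    linear_combination h11 - h10 - h01
  have hD : formDisc g = formDisc f := by
    have e : formDisc g = (a * d - b * c) ^ 2 * formDisc f := by
      simp only [formDisc, gm, gn, gk]; ring
    rw [e, hd]; ring
  have hne : (c : ℝ) * xiPlus g + d ≠ 0 := by
    intro hh
    obtain ⟨h1, h2⟩ := lin_irr hi hh
    subst h1 h2
    simp at hd
  have key : xiPlus f = (a * xiPlus g + b) / (c * xiPlus g + d) := by
    rw [eq_div_iff hne]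
    have hq := sqrt_sq_disc f0
    have hx : xiPlus f * (2 * f.1) = -(f.2.2 : ℝ) + Real.sqrt (formDisc f : ℝ) := by
      unfold xiPlus; field_simp
    have hy : xiPlus g * (2 * g.1) = -(g.2.2 : ℝ) + Real.sqrt (formDisc f : ℝ) := by
      rw [← hD]; unfold xiPlus; field_simp
    generalize Real.sqrt (formDisc f : ℝ) = S at *
    generalize xiPlus f = X at *
    generalize xiPlus g = Y at *
    have gm' : (g.1 : ℝ) = f.1 * a ^ 2 + f.2.1 * c ^ 2 + f.2.2 * a * c := by exact_mod_cast gm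
    have gk' : (g.2.2 : ℝ) = 2 * f.1 * a * b + 2 * f.2.1 * c * d + f.2.2 * (a * d + b * c) := by
      exact_mod_cast gk
    have hd' : (a : ℝ) * d - b * c = 1 := by exact_mod_cast hd
    apply mul_left_cancel₀ (mul_ne_zero (mul_ne_zero two_ne_zero hmf) (mul_ne_zero two_ne_zero hmg))
    have E1 : (2 * (f.1 : ℝ) * (2 * g.1)) * (X * (c * Y + d)) =
        (X * (2 * f.1)) * (c * (Y * (2 * g.1)) + d * (2 * g.1)) := by ring
    have E2 : (2 * (f.1 : ℝ) * (2 * g.1)) * (a * Y + b) =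
        2 * f.1 * (a * (Y * (2 * g.1)) + b * (2 * g.1)) := by ring
    rw [E1, E2, hx, hy, gk', gm']
    generalize (f.1 : ℝ) = m at *
    generalize (f.2.1 : ℝ) = n at *
    generalize (f.2.2 : ℝ) = k at *
    linear_combination (c : ℝ) * hq + (2 * m * a * S + c * k * S + 4 * c * m * n - c * k ^ 2) * hd'
  rw [key]
  exact (serret hi c.natAbs a b c d 1 le_rfl (Or.inl rfl) hd).2

/-! Words -/

theorem flatten_periodic (u : ℕ → ℤ) (d : ℕ) (h : ∀ j, u (j + d) = u j) (k : ℕ) :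
    (List.range (k * d)).map u = (List.replicate k ((List.range d).map u)).flatten := by
  induction k with
  | zero => simp
  | succ k ih =>
    rw [List.replicate_succ, List.flatten_cons, ← ih, Nat.succ_mul, add_comm, List.range_add,
      List.map_append, List.map_map]
    congr 1
    apply List.map_congr_left
    intro j _
    simp [Function.comp, add_comm d j, h]

theorem word_dvd {s : List ℤ} (hs : IsPeriodWord s) (Q N : ℕ)
    (h : ∀ j, s.getD ((N + j + Q) % s.length) 0 = s.getD ((N + j) % s.length) 0) :
    s.length ∣ Q := by
  obtain ⟨hne, hpos, hprim⟩ := hs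
  have hP : 0 < s.length := List.length_pos_iff.mpr hne
  by_contra hnd
  set P := s.length with hPdef
  have g1 : ∀ j, s.getD ((j + Q) % P) 0 = s.getD (j % P) 0 := by
    intro j
    have hNP : N ≤ N * P := Nat.le_mul_of_pos_right _ hP
    have := h (j + N * P - N)
    have e1 : N + (j + N * P - N) = j + N * P := by omega
    rw [e1, show j + N * P + Q = (j + Q) + N * P by ring, Nat.add_mul_mod_self_right,
      Nat.add_mul_mod_self_right] at this
    exact this
  have g2 : ∀ k j, s.getD ((j + Q * k) % P) 0 = s.getD (j % P) 0 := by
    intro k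
    induction k with
    | zero => simp
    | succ k ih =>
      intro j
      rw [show j + Q * (k + 1) = (j + Q * k) + Q by ring, g1, ih]
  have hd : Nat.gcd Q P < P := by
    refine lt_of_le_of_ne (Nat.gcd_le_right _ hP) ?_
    intro e
    exact hnd (Nat.gcd_eq_right_iff_dvd.mp e)
  obtain ⟨a, -, ha⟩ := Nat.exists_mul_mod_eq_gcd hd
  have g3 : ∀ j, s.getD ((j + Nat.gcd Q P) % P) 0 = s.getD (j % P) 0 := by
    intro j
    rw [← g2 a j, Nat.add_mod j (Q * a), ha, Nat.add_mod j, Nat.mod_eq_of_lt hd]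
  obtain ⟨k, hk⟩ := Nat.gcd_dvd_right Q P
  have hk2 : 2 ≤ k := by
    by_contra hk2
    have : k = 0 ∨ k = 1 := by omega
    rcases this with rfl | rfl <;> omega
  apply hprim _ k hk2
  · rw [← flatten_periodic (fun j => s.getD (j % P) 0) (Nat.gcd Q P) g3 k, mul_comm, ← hk]
    apply List.ext_getElem
    · simp [hPdef]
    · intro i h1 h2
      simp only [List.getElem_map, List.getElem_range]
      rw [Nat.mod_eq_of_lt h1, List.getD_eq_getElem _ _ h1]

theorem getD_rotate (s : List ℤ) (n j : ℕ) :
    (s.rotate n).getD (j % s.length) 0 = s.getD ((n + j) % s.length) 0 := by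
  rcases Nat.eq_zero_or_pos s.length with h | h
  · have : s = [] := List.length_eq_zero_iff.mp h
    subst this; simp
  · have h1 : j % s.length < s.length := Nat.mod_lt _ h
    have h2 : (n + j) % s.length < s.length := Nat.mod_lt _ h
    rw [List.getD_eq_getElem _ _ (by simpa using h1), List.getD_eq_getElem _ _ h2,
      List.getElem_rotate]
    congr 1
    rw [Nat.mod_add_mod, add_comm]

/-- finite continued fraction with a tail -/
noncomputable def cfW : List ℤ → ℝ → ℝ
  | [], x => x
  | a :: l, x => a + 1 / cfW l x

theorem cfW_gt {l : List ℤ} (hl : ∀ a ∈ l, 0 < a) {x : ℝ} (hx : 1 < x) : 1 < cfW l x := by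
  induction l with
  | nil => exact hx
  | cons a l ih =>
    have h1 := ih (fun b hb => hl b (by simp [hb]))
    have h2 : (1 : ℝ) ≤ a := by exact_mod_cast hl a (by simp)
    have : 0 < 1 / cfW l x := by positivity
    simp only [cfW]; linarith

theorem cfW_floor {a : ℤ} {l : List ℤ} (hl : ∀ a ∈ l, 0 < a) {x : ℝ} (hx : 1 < x) :
    ⌊cfW (a :: l) x⌋ = a ∧ gaussIter (cfW (a :: l) x) 1 = cfW l x := by
  have h1 := cfW_gt hl hx
  have h2 : 0 < 1 / cfW l x := by positivity
  have h3 : 1 / cfW l x < 1 := by rw [div_lt_one (by linarith)]; exact h1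
  have b1 : (a : ℝ) ≤ cfW (a :: l) x := by simp only [cfW]; linarith
  have b2 : cfW (a :: l) x < a + 1 := by simp only [cfW]; linarith
  refine ⟨Int.floor_eq_iff.mpr ⟨b1, b2⟩, ?_⟩
  rw [gauss_one_of _ a b1 b2]
  simp [cfW]

theorem cfW_iter {x : ℝ} (hx : 1 < x) (j : ℕ) : ∀ l : List ℤ, (∀ a ∈ l, 0 < a) → j ≤ l.length →
    gaussIter (cfW l x) j = cfW (l.drop j) x := by
  induction j with
  | zero => intro l _ _; rfl
  | succ j ih =>
    intro l hl hj
    cases l with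
    | nil => simp at hj
    | cons a l =>
      have hl' : ∀ b ∈ l, 0 < b := fun b hb => hl b (by simp [hb])
      rw [add_comm, ← gaussIter_add, (cfW_floor hl' hx).2, ih l hl' (by simpa using hj), add_comm]
      rfl

theorem cfW_terms {s : List ℤ} (hne : s ≠ []) (hs : ∀ a ∈ s, 0 < a) {x : ℝ} (hx : 0 < x)
    (hfix : cfW s x = x) (j : ℕ) : cfTerm x j = s.getD (j % s.length) 0 := by
  have hP : 0 < s.length := List.length_pos_iff.mpr hne
  have hx1 : 1 < x := by
    have aux : ∀ l : List ℤ, (∀ a ∈ l, 0 < a) → 0 < cfW l x := by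
      intro l hl
      induction l with
      | nil => exact hx
      | cons a l ih =>
        have h1 := ih (fun b hb => hl b (by simp [hb]))
        have h2 : (1 : ℝ) ≤ a := by exact_mod_cast hl a (by simp)
        have : 0 < 1 / cfW l x := by positivity
        simp only [cfW]; linarith
    cases s with
    | nil => exact absurd rfl hne
    | cons a l =>
      have h1 := aux l (fun b hb => hs b (by simp [hb]))
      have h2 : (1 : ℝ) ≤ a := by exact_mod_cast hs a (by simp)
      have : 0 < 1 / cfW l x := by positivity
      rw [← hfix]
      simp only [cfW]; linarith
  have hper : gaussIter x s.length = x := by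
    have := cfW_iter hx1 s.length s hs le_rfl
    rw [hfix] at this
    rw [this]; simp [cfW]
  have hper2 : ∀ k, gaussIter x (s.length * k) = x := by
    intro k
    induction k with
    | zero => rfl
    | succ k ih => rw [Nat.mul_succ, ← gaussIter_add, ih, hper]
  have hj : j % s.length < s.length := Nat.mod_lt _ hP
  have e : gaussIter x j = gaussIter x (j % s.length) := by
    conv_lhs => rw [← Nat.div_add_mod j s.length, ← gaussIter_add, hper2]
  have e2 := cfW_iter hx1 (j % s.length) s hs hj.le
  rw [hfix] at e2
  rw [cfTerm, e, e2, List.drop_eq_getElem_cons hj, List.getD_eq_getElem _ _ hj]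
  exact (cfW_floor (fun b hb => hs b (List.mem_of_mem_drop hb)) hx1).1

theorem cfW_mob (s : List ℤ) (hne : s ≠ []) (hs : ∀ a ∈ s, 0 < a) : ∃ p q r t : ℤ,
    1 ≤ p ∧ 1 ≤ q ∧ 1 ≤ r ∧ 0 ≤ t ∧ p * t - q * r = (-1) ^ s.length ∧
    ∀ x : ℝ, 0 < x → cfW s x = (p * x + q) / (r * x + t) := by
  induction s with
  | nil => exact absurd rfl hne
  | cons a l ih =>
    have ha := hs a (by simp)
    cases l with
    | nil =>
      refine ⟨a, 1, 1, 0, ha, le_rfl, le_rfl, le_rfl, by simp, ?_⟩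
      intro x hx
      simp only [cfW]; push_cast; field_simp; ring
    | cons b l =>
      obtain ⟨p, q, r, t, hp, hq, hr, ht, hd, H⟩ := ih (by simp) (fun c hc => hs c (by simp [hc]))
      refine ⟨a * p + r, a * q + t, p, q, by nlinarith, by nlinarith, hp, by linarith, ?_, ?_⟩
      · rw [List.length_cons, pow_succ, ← hd]; ring
      · intro x hx
        rw [cfW, H x hx]
        have hp' : (1 : ℝ) ≤ p := by exact_mod_cast hp
        have hq' : (1 : ℝ) ≤ q := by exact_mod_cast hq
        have : (p : ℝ) * x + q ≠ 0 := by positivity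
        rw [one_div_div]
        push_cast
        field_simp; ring

theorem exists_form {s : List ℤ} (hne : s ≠ []) (hs : ∀ a ∈ s, 0 < a) (hev : Even s.length) :
    ∃ f : ℤ × ℤ × ℤ, IsPrimitiveForm f ∧ 0 < formDisc f ∧ ¬ IsSquare (formDisc f) ∧
      ∀ j, cfTerm (xiPlus f) j = s.getD (j % s.length) 0 := by
  obtain ⟨p, q, r, t, hp, hq, hr, ht, hd, H⟩ := cfW_mob s hne hs
  rw [hev.neg_one_pow] at hd
  obtain ⟨x, y, z, hb⟩ := bez3 r (-q) (t - p)
  have hg1 : ((Int.gcd r (Int.gcd (-q) (t - p)) : ℕ) : ℤ) ∣ r := Int.gcd_dvd_left ..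
  have hg2 : ((Int.gcd r (Int.gcd (-q) (t - p)) : ℕ) : ℤ) ∣ (Int.gcd (-q) (t - p) : ℤ) :=
    Int.gcd_dvd_right ..
  have hg3 := hg2.trans (Int.gcd_dvd_left (-q) (t - p))
  have hg4 := hg2.trans (Int.gcd_dvd_right (-q) (t - p))
  have hD0 : (0 : ℤ) ≤ ((Int.gcd r (Int.gcd (-q) (t - p)) : ℕ) : ℤ) := Int.natCast_nonneg _
  generalize ((Int.gcd r (Int.gcd (-q) (t - p)) : ℕ) : ℤ) = D at *
  obtain ⟨m, hm⟩ := hg1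
  obtain ⟨n, hn⟩ := hg3
  obtain ⟨k, hk⟩ := hg4
  have hD : 0 < D := by
    rcases hD0.lt_or_eq with h | h
    · exact h
    · rw [← h] at hm; omega
  have hm0 : 0 < m := by
    by_contra h; nlinarith
  have hn0 : n < 0 := by
    by_contra h; nlinarith
  have hdisc : D ^ 2 * (k ^ 2 - 4 * m * n) = (p + t) ^ 2 - 4 := by
    have : D ^ 2 * (k ^ 2 - 4 * m * n) = (D * k) ^ 2 - 4 * (D * m) * (D * n) := by ring
    rw [this, ← hm, ← hn, ← hk]
    linear_combination (-4) * hd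
  have hpos : 0 < k ^ 2 - 4 * m * n := by nlinarith [sq_nonneg k, mul_pos hm0 (neg_pos.mpr hn0)]
  have hf0 : 0 < formDisc (m, n, k) := hpos
  have hfs : ¬ IsSquare (formDisc (m, n, k)) := by
    rintro ⟨w, hw⟩
    have hw' : k ^ 2 - 4 * m * n = w * w := hw
    have e : (p + t) ^ 2 - |D * w| ^ 2 = 4 := by
      rw [sq_abs]; rw [hw'] at hdisc; linear_combination -hdisc
    have hwpos : 0 < |D * w| := by
      rw [abs_pos]
      refine mul_ne_zero hD.ne' ?_
      rintro rfl
      rw [hw'] at hpos; simp at hpos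
    generalize |D * w| = v at *
    have hT : 1 ≤ p + t := by linarith
    generalize p + t = T at *
    have h1 : v < T := by nlinarith
    have h2 : T ≤ 2 := by nlinarith
    have : v = 1 := by omega
    have : T = 2 := by omega
    subst v T
    norm_num at e
  refine ⟨(m, n, k), ?_, hf0, hfs, ?_⟩
  · rw [prim_iff]
    refine ⟨x, y, z, ?_⟩
    apply mul_left_cancel₀ hD.ne'
    simp only
    rw [hm, hn, hk] at hb
    linear_combination hb
  · have hroot := xi_root hf0 hfs
    simp only at hroot
    have hmr : (0 : ℝ) < m := by exact_mod_cast hm0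
    have hxpos : 0 < xiPlus (m, n, k) := by
      unfold xiPlus
      simp only
      apply div_pos _ (by positivity)
      have : (k : ℝ) < Real.sqrt (formDisc (m, n, k) : ℝ) := by
        apply Real.lt_sqrt_of_sq_lt
        have : k ^ 2 < formDisc (m, n, k) := by simp only [formDisc]; nlinarith
        exact_mod_cast this
      linarith
    generalize xiPlus (m, n, k) = X at *
    apply cfW_terms hne hs hxpos
    have hrR : (1 : ℝ) ≤ r := by exact_mod_cast hr
    have htR : (0 : ℝ) ≤ t := by exact_mod_cast ht
    have hden : (0 : ℝ) < r * X + t := by positivity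
    rw [H X hxpos, div_eq_iff hden.ne']
    have hmR : (r : ℝ) = D * m := by exact_mod_cast hm
    have hnR : -(q : ℝ) = D * n := by exact_mod_cast hn
    have hkR : (t : ℝ) - p = D * k := by exact_mod_cast hk
    linear_combination (-X ^ 2) * hmR - hnR - X * hkR - (D : ℝ) * hroot

theorem even_part {s : List ℤ} (hs : IsPeriodWord s) (hev : Even s.length) :
      ∃ f g : ℤ × ℤ × ℤ, IsPrimitiveForm f ∧ IsPrimitiveForm g ∧
        0 < formDisc f ∧ ¬ IsSquare (formDisc f) ∧
        0 < formDisc g ∧ ¬ IsSquare (formDisc g) ∧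
        ¬ SLEquiv f g ∧
        (∃ sf : List ℤ, IsCFPeriod sf (xiPlus f) ∧ List.IsRotated sf s) ∧
        (∃ sg : List ℤ, IsCFPeriod sg (xiPlus g) ∧ List.IsRotated sg s) := by
  obtain ⟨f, hf, f0, fs, ht⟩ := exists_form hs.1 hs.2.1 hev
  have hP : 0 < s.length := List.length_pos_iff.mpr hs.1
  have g0 : 0 < formDisc (stepF f) := by rwa [stepF_disc]
  have gs : ¬ IsSquare (formDisc (stepF f)) := by rwa [stepF_disc]
  have hx := stepF_xi f0 fs
  have ht' : ∀ j, cfTerm (xiPlus (stepF f)) j = s.getD ((1 + j) % s.length) 0 := by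
    intro j; rw [hx, cfTerm_add, ht]
  refine ⟨f, stepF f, hf, stepF_prim hf, f0, fs, g0, gs, ?_, ⟨s, ⟨hs.1, ⟨0, ?_⟩, ?_⟩, List.IsRotated.refl _⟩,
    ⟨s, ⟨hs.1, ⟨s.length - 1, ?_⟩, ?_⟩, List.IsRotated.refl _⟩⟩
  · intro hSL
    have r1 := SL_xi f0 fs g0 gs hSL
    have r2 := tail_step (xiPlus f)
    rw [← hx] at r2
    obtain ⟨N, M, hNM, he⟩ := r1.trans r2
    have key : ∀ N M : ℕ, N ≤ M → gaussIter (xiPlus f) N = gaussIter (xiPlus f) M →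
        s.length ∣ M - N := by
      intro N M hle he
      apply word_dvd hs (M - N) N
      intro j
      rw [← ht, ← ht, ← cfTerm_add _ N j, he, cfTerm_add]
      congr 1; omega
    have hodd : Odd (N + M) := by
      rcases Nat.even_or_odd (N + M) with h | h
      · rw [h.neg_one_pow] at hNM; norm_num at hNM
      · exact h
    rcases le_total N M with h | h
    · have h1 := hev.two_dvd.trans (key N M h he)
      obtain ⟨c, hc⟩ := hodd
      omega
    · have h1 := hev.two_dvd.trans (key M N h he.symm)
      obtain ⟨c, hc⟩ := hodd
      omega
  · intro j; rw [zero_add, ht]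
  · rintro Q hQ ⟨N, -, h⟩
    apply Nat.le_of_dvd hQ
    apply word_dvd hs Q N
    intro j
    rw [← ht, ← ht]; exact h j
  · intro j
    rw [ht', show 1 + (s.length - 1 + j) = j + s.length by omega, Nat.add_mod_right]
  · rintro Q hQ ⟨N, -, h⟩
    apply Nat.le_of_dvd hQ
    apply word_dvd hs Q (1 + N)
    intro j
    have := h j
    rw [ht', ht'] at this
    rw [show 1 + N + j + Q = 1 + (N + j + Q) by ring, this, add_assoc]

theorem tail_terms {s sf : List ℤ} {x : ℝ} (h : IsCFPeriod sf x) (hr : List.IsRotated sf s) :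
    ∃ N, ∀ j, cfTerm x (N + j) = s.getD (j % s.length) 0 := by
  obtain ⟨n, hn⟩ := hr
  obtain ⟨-, ⟨N, hN⟩, -⟩ := h
  refine ⟨N + n, fun j => ?_⟩
  rw [add_assoc, hN, ← hn, List.length_rotate, getD_rotate]

theorem odd_part {s : List ℤ} (hod : Odd s.length) :
      ∀ f g : ℤ × ℤ × ℤ, IsPrimitiveForm f → IsPrimitiveForm g →
        0 < formDisc f → ¬ IsSquare (formDisc f) →
        0 < formDisc g → ¬ IsSquare (formDisc g) →
        ∀ sf sg : List ℤ, IsCFPeriod sf (xiPlus f) → IsCFPeriod sg (xiPlus g) →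
          List.IsRotated sf s → List.IsRotated sg s → SLEquiv f g := by
  intro f g hf hg f0 fs g0 gs sf sg pf pg rf rg
  obtain ⟨N, hN⟩ := tail_terms pf rf
  obtain ⟨M, hM⟩ := tail_terms pg rg
  obtain ⟨N', hev, hN'⟩ : ∃ N', Even (N' + M) ∧
      ∀ j, cfTerm (xiPlus f) (N' + j) = s.getD (j % s.length) 0 := by
    rcases Nat.even_or_odd (N + M) with h | h
    · exact ⟨N, h, hN⟩
    · refine ⟨N + s.length, ?_, fun j => ?_⟩
      · rw [show N + s.length + M = (N + M) + s.length by ring]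
        exact h.add_odd hod
      · rw [add_assoc, hN, Nat.add_mod_left]
  obtain ⟨F, hF, dF, rF, xF⟩ := iter_form hf f0 fs N'
  obtain ⟨G, hG, dG, rG, xG⟩ := iter_form hg g0 gs M
  have hxx : xiPlus F = xiPlus G := by
    rw [xF, xG]
    apply cf_unique (irr_iter (irr_xi f0 fs) _) (irr_iter (irr_xi g0 gs) _)
    intro j
    rw [cfTerm_add, cfTerm_add, hN', hM]
  have hFG : F = G := form_unique hF hG (by rwa [dF]) (by rwa [dF]) (by rwa [dG]) (by rwa [dG]) hxx
  subst hFG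
  have h := rF.trans (rG.symm (by rw [← pow_add]; exact (Even.add_self M).neg_one_pow))
  rw [← pow_add, hev.neg_one_pow] at h
  exact h.toSL

/-- A period `s` of length `P` determines a unique primitive class iff `P` is odd. -/
theorem statement3 (s : List ℤ) (hs : IsPeriodWord s) :
    (Odd s.length →
      ∀ f g : ℤ × ℤ × ℤ, IsPrimitiveForm f → IsPrimitiveForm g →
        0 < formDisc f → ¬ IsSquare (formDisc f) →
        0 < formDisc g → ¬ IsSquare (formDisc g) →
        ∀ sf sg : List ℤ, IsCFPeriod sf (xiPlus f) → IsCFPeriod sg (xiPlus g) →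
          List.IsRotated sf s → List.IsRotated sg s → SLEquiv f g) ∧
    (Even s.length →
      ∃ f g : ℤ × ℤ × ℤ, IsPrimitiveForm f ∧ IsPrimitiveForm g ∧
        0 < formDisc f ∧ ¬ IsSquare (formDisc f) ∧
        0 < formDisc g ∧ ¬ IsSquare (formDisc g) ∧
        ¬ SLEquiv f g ∧
        (∃ sf : List ℤ, IsCFPeriod sf (xiPlus f) ∧ List.IsRotated sf s) ∧
        (∃ sg : List ℤ, IsCFPeriod sg (xiPlus g) ∧ List.IsRotated sg s)) := by
  exact ⟨odd_part, even_part hs⟩
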